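/- arXiv:2001.09236 — 13 statements merged into one kernel-verified Lean document; each statement's English description precedes it below -/
import Mathlib

section
/- The function g is monotone nondecreasing on the interval (−∞, s*] and monotone nonincreasing on the interval [s*, ∞), where s* := (a + b)/2 − c. -/
open MeasureTheory

/-- The one-dimensional transition-probability function
`g s = ∫ x in a..b, f (x - s)` is nondecreasing on `(-∞, s*]` and
nonincreasing on `[s*, ∞)`, where `s* = (a + b)/2 - c`, whenever the noise
density `f` is symmetric and unimodal about `c`. -/
theorem g_unimodal_about_sstar
    (f : ℝ → ℝ) (c a b : ℝ)
    (hf_nonneg : ∀ x, 0 ≤ f x)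
    (hf_int : Integrable f)
    (hf_symm : ∀ t, f (c + t) = f (c - t))
    (hf_mono : MonotoneOn f (Set.Iic c))
    (hf_anti : AntitoneOn f (Set.Ici c))
    (hab : a < b)
    (g : ℝ → ℝ) (hg : ∀ s, g s = ∫ x in a..b, f (x - s))
    (sstar : ℝ) (hsstar : sstar = (a + b) / 2 - c) :
    MonotoneOn g (Set.Iic sstar) ∧ AntitoneOn g (Set.Ici sstar) := by
  have habs : ∀ x, f x = f (c + |x - c|) := by
    intro x
    rcases abs_cases (x - c) with ⟨h, _⟩ | ⟨h, _⟩
    · rw [h]; congr 1; ring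
    · rw [h, hf_symm]; congr 1; ring
  have key : ∀ x y, |y - c| ≤ |x - c| → f x ≤ f y := by
    intro x y h
    rw [habs x, habs y]
    apply hf_anti
    · simp
    · simp
    · linarith
  have hI : ∀ u v : ℝ, IntervalIntegrable f volume u v := fun u v => hf_int.intervalIntegrable
  have hI' : ∀ u v : ℝ, IntervalIntegrable (fun x => f (x + (b - a))) volume u v :=
    fun u v => (hf_int.comp_add_right (b - a)).intervalIntegrable
  have hdiff : ∀ s t, g t - g s
      = (∫ x in (a - t)..(a - s), f x) - ∫ x in (a - t)..(a - s), f (x + (b - a)) := by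
    intro s t
    rw [hg, hg, intervalIntegral.integral_comp_sub_right, intervalIntegral.integral_comp_sub_right,
      intervalIntegral.integral_comp_add_right]
    have e1 : a - t + (b - a) = b - t := by ring
    have e2 : a - s + (b - a) = b - s := by ring
    rw [e1, e2]
    have h1 := intervalIntegral.integral_add_adjacent_intervals (hI (a - t) (a - s)) (hI (a - s) (b - s))
    have h2 := intervalIntegral.integral_add_adjacent_intervals (hI (a - t) (b - t)) (hI (b - t) (b - s))
    linarith
  constructor
  · intro s hs t ht hst
    simp only [Set.mem_Iic] at hs ht
    have h := hdiff s t
    have := intervalIntegral.integral_mono_on (by linarith : a - t ≤ a - s)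
      (hI' _ _) (hI _ _) (fun x hx => key (x + (b - a)) x (by
        have := hx.1
        apply abs_le.2 ⟨?_, ?_⟩
        · linarith [le_abs_self (x + (b - a) - c)]
        · linarith [le_abs_self (x + (b - a) - c)]))
    linarith
  · intro s hs t ht hst
    simp only [Set.mem_Ici] at hs ht
    have h := hdiff s t
    have := intervalIntegral.integral_mono_on (by linarith : a - t ≤ a - s)
      (hI _ _) (hI' _ _) (fun x hx => key x (x + (b - a)) (by
        have := hx.2
        apply abs_le.2 ⟨?_, ?_⟩
        · linarith [neg_abs_le (x - c)]
        · linarith [neg_abs_le (x - c)]))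
    linarith
end

section
/- For every s ∈ ℝ one has g(s) ≤ g(s*), where s* := (a + b)/2 − c; that is, the probability of landing in [a, b] is maximized by placing the mode of the shifted noise density at the center of [a, b]. -/
open MeasureTheory

/-- The one-dimensional transition probability `g s = ∫ x in a..b, f (x - s)`
is maximized at `s* = (a + b)/2 - c`: placing the mode of the shifted noise
density at the center of `[a, b]` maximizes the probability of landing in
`[a, b]`. -/
theorem g_le_g_sstar
    (f : ℝ → ℝ) (c a b : ℝ)
    (hf_nonneg : ∀ x, 0 ≤ f x)
    (hf_int : Integrable f)
    (hf_symm : ∀ t, f (c + t) = f (c - t))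
    (hf_mono : MonotoneOn f (Set.Iic c))
    (hf_anti : AntitoneOn f (Set.Ici c))
    (hab : a < b)
    (g : ℝ → ℝ) (hg : ∀ s, g s = ∫ x in a..b, f (x - s))
    (sstar : ℝ) (hsstar : sstar = (a + b) / 2 - c) :
    ∀ s : ℝ, g s ≤ g sstar := by
  have habs : ∀ u, f (c + u) = f (c + |u|) := by
    intro u
    rcases abs_cases u with ⟨h, _⟩ | ⟨h, _⟩
    · rw [h]
    · rw [h, hf_symm u, sub_eq_add_neg]
  have key : ∀ u v, |u| ≤ |v| → f (c + v) ≤ f (c + u) := by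
    intro u v huv
    rw [habs u, habs v]
    apply hf_anti
    · simp [Set.mem_Ici]
    · simp [Set.mem_Ici]
    · linarith
  have hii : ∀ p q, IntervalIntegrable f volume p q := fun p q =>
    hf_int.intervalIntegrable
  intro s
  obtain ⟨h, hh⟩ : ∃ h, h = (b - a) / 2 := ⟨_, rfl⟩
  obtain ⟨d, hd⟩ : ∃ d, d = sstar - s := ⟨_, rfl⟩
  have hpos : 0 < h := by linarith
  have e1 : g sstar = ∫ x in (c - h)..(c + h), f x := by
    rw [hg, intervalIntegral.integral_comp_sub_right]
    congr 1 <;> linarith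
  have e2 : g s = ∫ x in (c - h + d)..(c + h + d), f x := by
    rw [hg, intervalIntegral.integral_comp_sub_right]
    congr 1 <;> linarith
  have hA := intervalIntegral.integral_add_adjacent_intervals
    (hii (c - h) (c - h + d)) (hii (c - h + d) (c + h + d))
  have hB := intervalIntegral.integral_add_adjacent_intervals
    (hii (c - h) (c + h)) (hii (c + h) (c + h + d))
  have sL : ∫ x in (c - h)..(c - h + d), f x = ∫ t in (0:ℝ)..d, f ((c - h) + t) := by
    rw [intervalIntegral.integral_comp_add_left, add_zero]
  have sR : ∫ x in (c + h)..(c + h + d), f x = ∫ t in (0:ℝ)..d, f ((c + h) + t) := by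
    rw [intervalIntegral.integral_comp_add_left, add_zero]
  have iL : ∀ p q, IntervalIntegrable (fun t => f ((c - h) + t)) volume p q := fun p q =>
    (hf_int.comp_add_left (c - h)).intervalIntegrable
  have iR : ∀ p q, IntervalIntegrable (fun t => f ((c + h) + t)) volume p q := fun p q =>
    (hf_int.comp_add_left (c + h)).intervalIntegrable
  rcases le_total 0 d with h0 | h0
  · have := intervalIntegral.integral_mono_on h0 (iR 0 d) (iL 0 d) (fun t ht => by
      have := key (-h + t) (h + t) (by
        have := ht.1
        rw [abs_of_nonneg (by linarith : 0 ≤ h + t), abs_le]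
        constructor <;> linarith)
      convert this using 2 <;> ring)
    linarith
  · have := intervalIntegral.integral_mono_on h0 (iL d 0) (iR d 0) (fun t ht => by
      have := key (h + t) (-h + t) (by
        have := ht.2
        rw [abs_of_nonpos (by linarith : -h + t ≤ 0), abs_le]
        constructor <;> linarith)
      convert this using 2 <;> ring)
    rw [intervalIntegral.integral_symm] at sL sR
    rw [intervalIntegral.integral_symm 0 d] at this
    rw [intervalIntegral.integral_symm 0 d] at this
    rw [← intervalIntegral.integral_symm] at sL sR
    linarith
end

section
/- For every s ∈ [ř, r̂] one has g(s) ≤ g(s_max); consequently the maximum of g over the interval [ř, r̂] is attained at s_max (the projection of s* onto [ř, r̂]). This is the constrained upper-bound placement rule of Fact 3 (equations (16) and (18) of the paper). -/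
open MeasureTheory

/-- Constrained upper-bound placement rule (Fact 3, eqs. (16) and (18)):
the maximum of `g` over `[ř, r̂]` is attained at `s_max`, the projection of
`s* = (a+b)/2 - c` onto `[ř, r̂]`. -/
theorem g_max_on_interval
    (f : ℝ → ℝ) (c a b : ℝ)
    (hf_nonneg : ∀ x, 0 ≤ f x)
    (hf_int : Integrable f)
    (hf_symm : ∀ t, f (c + t) = f (c - t))
    (hf_mono : MonotoneOn f (Set.Iic c))
    (hf_anti : AntitoneOn f (Set.Ici c))
    (hab : a < b)
    (g : ℝ → ℝ) (hg : ∀ s, g s = ∫ x in a..b, f (x - s))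
    (sstar : ℝ) (hsstar : sstar = (a + b) / 2 - c)
    (rlo rhi : ℝ) (hr : rlo ≤ rhi)
    (smax : ℝ)
    (hsmax : smax = if rlo ≤ sstar ∧ sstar ≤ rhi then sstar
      else if rhi < sstar then rhi else rlo) :
    smax ∈ Set.Icc rlo rhi ∧ ∀ s ∈ Set.Icc rlo rhi, g s ≤ g smax := by
  have key : ∀ x y, |y - c| ≤ |x - c| → f x ≤ f y := by
    have h1 : ∀ x, f x = f (c + |x - c|) := by
      intro x
      rcases le_total 0 (x - c) with h | h
      · rw [abs_of_nonneg h]; congr 1; ring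
      · rw [abs_of_nonpos h, hf_symm]; congr 1; ring
    intro x y hxy
    rw [h1 x, h1 y]
    apply hf_anti
    · simp
    · simp
    · linarith
  have hI : ∀ u v, IntervalIntegrable f volume u v := fun u v => hf_int.intervalIntegrable
  have hI2 : ∀ u v, IntervalIntegrable (fun x => f (x + (b - a))) volume u v :=
    fun u v => (hf_int.comp_add_right (b - a)).intervalIntegrable
  have hdiff : ∀ u v, g v - g u
      = (∫ x in (a - v)..(a - u), f x) - ∫ x in (a - v)..(a - u), f (x + (b - a)) := by
    intro u v
    rw [hg, hg, intervalIntegral.integral_comp_sub_right, intervalIntegral.integral_comp_sub_right,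
      intervalIntegral.integral_comp_add_right]
    have e1 : a - v + (b - a) = b - v := by ring
    have e2 : a - u + (b - a) = b - u := by ring
    rw [e1, e2]
    have h1 := intervalIntegral.integral_add_adjacent_intervals (hI (a - v) (a - u)) (hI (a - u) (b - u))
    have h2 := intervalIntegral.integral_add_adjacent_intervals (hI (a - v) (b - v)) (hI (b - v) (b - u))
    linarith
  have inc : ∀ u v, u ≤ v → v ≤ sstar → g u ≤ g v := by
    intro u v huv hv
    have := intervalIntegral.integral_mono_on (by linarith : a - v ≤ a - u) (hI2 _ _) (hI _ _)
      (fun x hx => key (x + (b - a)) x (by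
        have := hx.1
        exact sq_le_sq.mp (by nlinarith)))
    linarith [hdiff u v]
  have dec : ∀ u v, u ≤ v → sstar ≤ u → g v ≤ g u := by
    intro u v huv hv
    have := intervalIntegral.integral_mono_on (by linarith : a - v ≤ a - u) (hI _ _) (hI2 _ _)
      (fun x hx => key x (x + (b - a)) (by
        have := hx.2
        exact sq_le_sq.mp (by nlinarith)))
    linarith [hdiff u v]
  split_ifs at hsmax with h1 h2
  · subst hsmax
    refine ⟨h1, fun s hs => ?_⟩
    rcases le_total s smax with h | h
    · exact inc _ _ h le_rfl
    · exact dec _ _ h le_rfl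
  · subst hsmax
    exact ⟨⟨hr, le_rfl⟩, fun s hs => inc _ _ hs.2 h2.le⟩
  · subst hsmax
    have h3 : sstar ≤ smax := by
      by_contra h
      exact h1 ⟨(not_le.mp h).le, not_lt.mp h2⟩
    exact ⟨⟨le_rfl, hr⟩, fun s hs => dec _ _ hs.1 h3⟩
end

section
/- For every s ∈ [ř, r̂] one has g(s) ≥ g(s_min); consequently the minimum of g over the interval [ř, r̂] is attained at s_min (the endpoint of [ř, r̂] farther from s*). This is the constrained lower-bound placement rule of Fact 3 (equations (17) and (19) of the paper). -/
open MeasureTheory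

theorem aux_window (h : ℝ → ℝ) (hi : Integrable h) (heven : ∀ t, h (-t) = h t)
    (hanti : AntitoneOn h (Set.Ici 0)) (L : ℝ) (hL : 0 ≤ L) (d e : ℝ) (hde : |d| ≤ |e|) :
    ∫ x in (e - L)..(e + L), h x ≤ ∫ x in (d - L)..(d + L), h x := by
  have habs : ∀ x, h |x| = h x := by
    intro x
    rcases abs_choice x with hx | hx <;> rw [hx]
    exact heven x
  have hle : ∀ x y, |y| ≤ |x| → h x ≤ h y := by
    intro x y hxy
    rw [← habs x, ← habs y]
    exact hanti (abs_nonneg y) (abs_nonneg x) hxy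
  have hii : ∀ p q : ℝ, IntervalIntegrable h volume p q := fun p q => hi.intervalIntegrable
  have hneg : ∀ d : ℝ, ∫ x in (-d - L)..(-d + L), h x = ∫ x in (d - L)..(d + L), h x := by
    intro d
    have h1 := intervalIntegral.integral_comp_neg (a := d - L) (b := d + L) h
    simp only [heven] at h1
    rw [h1]
    congr 1 <;> ring
  have hkabs : ∀ d : ℝ, ∫ x in (|d| - L)..(|d| + L), h x = ∫ x in (d - L)..(d + L), h x := by
    intro d
    rcases abs_choice d with hx | hx <;> rw [hx]
    exact hneg d
  rw [← hkabs d, ← hkabs e]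
  have hd := abs_nonneg d
  generalize |d| = d at *
  generalize |e| = e at *
  have h1 := intervalIntegral.integral_add_adjacent_intervals (hii (d - L) (e - L)) (hii (e - L) (e + L))
  have h2 := intervalIntegral.integral_add_adjacent_intervals (hii (d - L) (d + L)) (hii (d + L) (e + L))
  have h3 : ∫ x in (d + L)..(e + L), h x ≤ ∫ x in (d - L)..(e - L), h x := by
    rw [← intervalIntegral.integral_comp_add_right h L, ← intervalIntegral.integral_comp_sub_right h L]
    apply intervalIntegral.integral_mono_on hde
    · exact (hi.comp_add_right L).intervalIntegrable
    · exact (hi.comp_sub_right L).intervalIntegrable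
    · intro x hx
      apply hle
      have hx0 : 0 ≤ x := hd.trans hx.1
      rw [abs_of_nonneg (by linarith : 0 ≤ x + L), abs_le]
      constructor <;> linarith
  linarith

/-- Constrained lower-bound placement rule (Fact 3, eqs. (17) and (19)):
the minimum of `g` over `[ř, r̂]` is attained at `s_min`, the endpoint of
`[ř, r̂]` farther from `s* = (a+b)/2 - c`. -/
theorem g_min_on_interval
    (f : ℝ → ℝ) (c a b : ℝ)
    (hf_nonneg : ∀ x, 0 ≤ f x)
    (hf_int : Integrable f)
    (hf_symm : ∀ t, f (c + t) = f (c - t))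
    (hf_mono : MonotoneOn f (Set.Iic c))
    (hf_anti : AntitoneOn f (Set.Ici c))
    (hab : a < b)
    (g : ℝ → ℝ) (hg : ∀ s, g s = ∫ x in a..b, f (x - s))
    (sstar : ℝ) (hsstar : sstar = (a + b) / 2 - c)
    (rlo rhi : ℝ) (hr : rlo ≤ rhi)
    (smax : ℝ)
    (hsmax : smax = if rlo ≤ sstar ∧ sstar ≤ rhi then sstar
      else if rhi < sstar then rhi else rlo)
    (smin : ℝ)
    (hsmin : smin = if (rlo + rhi) / 2 < smax then rlo else rhi) :
    smin ∈ Set.Icc rlo rhi ∧ ∀ s ∈ Set.Icc rlo rhi, g smin ≤ g s := by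
  have hfar : smin ∈ Set.Icc rlo rhi ∧ ∀ s ∈ Set.Icc rlo rhi, |sstar - s| ≤ |sstar - smin| := by
    constructor
    · rw [hsmin]
      split_ifs <;> constructor <;> linarith
    · rintro s ⟨hs1, hs2⟩
      clear hsstar hg hf_nonneg hf_symm
      rw [abs_le]
      rcases abs_cases (sstar - smin) with ⟨h1, h2⟩ | ⟨h1, h2⟩ <;> rw [h1] <;>
        split_ifs at hsmax with k1 k2 <;> split_ifs at hsmin with k3 <;>
        subst hsmin <;> subst hsmax <;> constructor <;> grind
  refine ⟨hfar.1, fun s hs => ?_⟩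
  have hgk : ∀ s, g s = ∫ x in ((sstar - s) - (b - a) / 2)..((sstar - s) + (b - a) / 2), f (c + x) := by
    intro s
    rw [hg, intervalIntegral.integral_comp_sub_right f s, intervalIntegral.integral_comp_add_left f c]
    congr 1 <;> rw [hsstar] <;> ring
  rw [hgk, hgk]
  refine aux_window (fun x => f (c + x)) (hf_int.comp_add_left c) ?_ ?_ _ (by linarith) _ _
    (hfar.2 s hs)
  · intro t
    simp only [hf_symm t, sub_eq_add_neg]
  · intro x hx y hy hxy
    simp only [Set.mem_Ici] at hx hy
    exact hf_anti (by simpa using hx) (by simpa using hy) (by linarith)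
end

section
/- For every s ∈ ∏_{i=1}^n [ř_i + u_i, r̂_i + u_i] one has μ({y ∈ ℝⁿ : s + y ∈ ∏_{i=1}^n [a_i, b_i]}) ≤ ∏_{i=1}^n g_i(s_{i,max}); moreover the point (s_{1,max}, …, s_{n,max}) belongs to ∏_{i=1}^n [ř_i + u_i, r̂_i + u_i] and attains equality, so the supremum of the landing probability over this rectangle of positions equals ∏_{i=1}^n g_i(s_{i,max}). (This is the upper transition-probability bound of Fact 3 of the paper.) -/
open MeasureTheory

lemma aux_unimodal (f : ℝ → ℝ) (c : ℝ) (hs : ∀ t, f (c + t) = f (c - t))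
    (ha : AntitoneOn f (Set.Ici c)) {x y : ℝ} (h : |x - c| ≤ |y - c|) : f y ≤ f x := by
  have key : ∀ z, f z = f (c + |z - c|) := by
    intro z
    rcases abs_cases (z - c) with ⟨h1, _⟩ | ⟨h1, _⟩
    · rw [h1]; congr 1; ring
    · rw [h1, hs]; congr 1; ring
  rw [key x, key y]
  apply ha
  · simp
  · simp
  · linarith

lemma aux_shift (f : ℝ → ℝ) (hi : Integrable f) (a b s t : ℝ) :
    (∫ x in a..b, f (x - t)) - ∫ x in a..b, f (x - s)
      = ∫ x in (a - t)..(a - s), (f x - f (x + (b - a))) := by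
  have I : ∀ p q, IntervalIntegrable f volume p q := fun p q => hi.intervalIntegrable
  have hi2 : Integrable (fun x => f (x + (b - a))) := hi.comp_add_right (b - a)
  rw [intervalIntegral.integral_comp_sub_right, intervalIntegral.integral_comp_sub_right,
    intervalIntegral.integral_sub (I _ _) hi2.intervalIntegrable,
    intervalIntegral.integral_comp_add_right]
  have e1 : a - t + (b - a) = b - t := by ring
  have e2 : a - s + (b - a) = b - s := by ring
  rw [e1, e2]
  have h1 := intervalIntegral.integral_add_adjacent_intervals (I (a - t) (a - s)) (I (a - s) (b - s))
  have h2 := intervalIntegral.integral_add_adjacent_intervals (I (a - t) (b - t)) (I (b - t) (b - s))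
  linarith

lemma aux_le (f : ℝ → ℝ) (c : ℝ) (hi : Integrable f) (hs : ∀ t, f (c + t) = f (c - t))
    (ha : AntitoneOn f (Set.Ici c)) (a b s t : ℝ) (hab : a < b)
    (h : (s ≤ t ∧ t ≤ (a + b) / 2 - c) ∨ (t ≤ s ∧ (a + b) / 2 - c ≤ t)) :
    (∫ x in a..b, f (x - s)) ≤ ∫ x in a..b, f (x - t) := by
  rw [← sub_nonneg, aux_shift f hi]
  rcases h with ⟨h1, h2⟩ | ⟨h1, h2⟩
  · apply intervalIntegral.integral_nonneg (by linarith)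
    intro x hx
    have := aux_unimodal f c hs ha (x := x) (y := x + (b - a)) (by
      have := hx.1
      rw [abs_le, abs_of_nonneg (by linarith)]
      constructor <;> linarith)
    linarith
  · rw [intervalIntegral.integral_symm, ← intervalIntegral.integral_neg]
    apply intervalIntegral.integral_nonneg (by linarith)
    intro x hx
    have := aux_unimodal f c hs ha (x := x + (b - a)) (y := x) (by
      have := hx.2
      rw [abs_le, abs_of_nonpos (by linarith)]
      constructor <;> linarith)
    linarith

lemma aux_measure (f : ℝ → ℝ) (h0 : ∀ x, 0 ≤ f x) (hi : Integrable f) (a b s : ℝ) (hab : a < b) :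
    ((volume : Measure ℝ).withDensity fun x => ENNReal.ofReal (f x)) (Set.Icc (a - s) (b - s))
      = ENNReal.ofReal (∫ x in a..b, f (x - s)) := by
  rw [withDensity_apply _ measurableSet_Icc, intervalIntegral.integral_comp_sub_right,
    intervalIntegral.integral_of_le (by linarith), ← integral_Icc_eq_integral_Ioc,
    ofReal_integral_eq_lintegral_ofReal hi.integrableOn (Filter.Eventually.of_forall h0)]

/-- Upper transition-probability bound of Fact 3: for every position `s` in the
shifted reachable rectangle `∏ [ř_i + u_i, r̂_i + u_i]`, the probability that
`s + w` lands in the target rectangle `∏ [a_i, b_i]` is at most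
`∏ g_i (s_{i,max})`, and this bound is attained at `s_max`, which belongs to
the rectangle. -/
theorem upper_transition_bound
    (n : ℕ)
    (f : Fin n → ℝ → ℝ) (c a b rlo rhi u : Fin n → ℝ)
    (hf_nonneg : ∀ i x, 0 ≤ f i x)
    (hf_int : ∀ i, Integrable (f i))
    (hf_prob : ∀ i, ∫ x, f i x = 1)
    (hf_symm : ∀ i t, f i (c i + t) = f i (c i - t))
    (hf_mono : ∀ i, MonotoneOn (f i) (Set.Iic (c i)))
    (hf_anti : ∀ i, AntitoneOn (f i) (Set.Ici (c i)))
    (hab : ∀ i, a i < b i) (hr : ∀ i, rlo i ≤ rhi i)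
    (μ : Measure (Fin n → ℝ))
    (hμ : μ = Measure.pi fun i =>
      (volume : Measure ℝ).withDensity fun x => ENNReal.ofReal (f i x))
    (g : Fin n → ℝ → ℝ)
    (hg : ∀ i s, g i s = ∫ x in (a i)..(b i), f i (x - s))
    (sstar smax : Fin n → ℝ)
    (hsstar : ∀ i, sstar i = (a i + b i) / 2 - c i)
    (hsmax : ∀ i, smax i =
      if rlo i + u i ≤ sstar i ∧ sstar i ≤ rhi i + u i then sstar i
      else if rhi i + u i < sstar i then rhi i + u i else rlo i + u i) :
    (∀ s : Fin n → ℝ, (∀ i, s i ∈ Set.Icc (rlo i + u i) (rhi i + u i)) →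
      μ {y | ∀ i, s i + y i ∈ Set.Icc (a i) (b i)} ≤
        ENNReal.ofReal (∏ i, g i (smax i)))
    ∧ (∀ i, smax i ∈ Set.Icc (rlo i + u i) (rhi i + u i))
    ∧ μ {y | ∀ i, smax i + y i ∈ Set.Icc (a i) (b i)} =
        ENNReal.ofReal (∏ i, g i (smax i)) := by
  have hg0 : ∀ i s, 0 ≤ g i s := fun i s => by
    rw [hg]
    exact intervalIntegral.integral_nonneg (hab i).le fun x _ => hf_nonneg i _
  have hμs : ∀ s : Fin n → ℝ, μ {y | ∀ i, s i + y i ∈ Set.Icc (a i) (b i)} =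
      ENNReal.ofReal (∏ i, g i (s i)) := by
    intro s
    have hfin : ∀ i, IsFiniteMeasure
        ((volume : Measure ℝ).withDensity fun x => ENNReal.ofReal (f i x)) :=
      fun i => isFiniteMeasure_withDensity_ofReal (hf_int i).2
    have hset : {y : Fin n → ℝ | ∀ i, s i + y i ∈ Set.Icc (a i) (b i)} =
        Set.univ.pi fun i => Set.Icc (a i - s i) (b i - s i) := by
      ext y
      simp only [Set.mem_setOf_eq, Set.mem_pi, Set.mem_univ, true_imp_iff, Set.mem_Icc]
      refine forall_congr' fun i => ?_
      constructor <;> rintro ⟨h1, h2⟩ <;> constructor <;> linarith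
    rw [hset, hμ, Measure.pi_pi, ENNReal.ofReal_prod_of_nonneg fun i _ => hg0 i _]
    refine Finset.prod_congr rfl fun i _ => ?_
    rw [aux_measure (f i) (hf_nonneg i) (hf_int i) _ _ _ (hab i), hg]
  refine ⟨fun s hs => ?_, fun i => ?_, hμs smax⟩
  · rw [hμs]
    apply ENNReal.ofReal_le_ofReal
    refine Finset.prod_le_prod (fun i _ => hg0 i _) fun i _ => ?_
    rw [hg, hg]
    apply aux_le (f i) (c i) (hf_int i) (hf_symm i) (hf_anti i) _ _ _ _ (hab i)
    rw [← hsstar, hsmax]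
    obtain ⟨h1, h2⟩ := hs i
    grind
  · rw [hsmax]
    have := hr i
    simp only [Set.mem_Icc]
    grind
end

section
/- Let D ⊆ ℝⁿ, let Q_j ⊆ D, and let F : D → ℝⁿ be any map such that F(x) ∈ ∏_{i=1}^n [ř_i, r̂_i] for every x ∈ Q_j (i.e. the rectangle over-approximates the one-step reachable set of Q_j under F). Then for every x ∈ Q_j and every u ∈ ℝⁿ, the transition probability satisfies ∏_{i=1}^n g_i(s_{i,min}) ≤ μ({y ∈ ℝⁿ : F(x) + u + y ∈ ∏_{i=1}^n [a_i, b_i]}) ≤ ∏_{i=1}^n g_i(s_{i,max}). (This is Fact 3 combined with Remark 1 of the paper: the displayed products are valid lower and upper bounds on the probability that the stochastic system x⁺ = F(x) + u + w transitions from any point of Q_j into the target rectangle.) -/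
open MeasureTheory

lemma aux_abs (f : ℝ → ℝ) (c : ℝ) (hs : ∀ t, f (c + t) = f (c - t))
    (ha : AntitoneOn f (Set.Ici c)) (x y : ℝ) (h : |x| ≤ |y|) : f (c + y) ≤ f (c + x) := by
  have key : ∀ z, f (c + z) = f (c + |z|) := by
    intro z
    rcases abs_cases z with ⟨h1, _⟩ | ⟨h1, _⟩
    · rw [h1]
    · rw [h1, hs z, sub_eq_add_neg]
  rw [key x, key y]
  have := abs_nonneg x
  have := abs_nonneg y
  apply ha <;> simp <;> linarith

lemma aux_G_anti (f : ℝ → ℝ) (c h : ℝ) (hi : Integrable f) (hs : ∀ t, f (c + t) = f (c - t))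
    (ha : AntitoneOn f (Set.Ici c)) (hh : 0 ≤ h) (d e : ℝ) (hd : 0 ≤ d) (hde : d ≤ e) :
    ∫ x in (c + e - h)..(c + e + h), f x ≤ ∫ x in (c + d - h)..(c + d + h), f x := by
  have ii : ∀ p q, IntervalIntegrable f volume p q := fun p q => hi.intervalIntegrable
  have h1 := intervalIntegral.integral_add_adjacent_intervals
    (ii (c + d - h) (c + e - h)) (ii (c + e - h) (c + e + h))
  have h2 := intervalIntegral.integral_add_adjacent_intervals
    (ii (c + d - h) (c + d + h)) (ii (c + d + h) (c + e + h))
  have h3 : ∫ x in (c + d + h)..(c + e + h), f x ≤ ∫ x in (c + d - h)..(c + e - h), f x := by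
    have e1 : ∫ x in (c + d + h)..(c + e + h), f x = ∫ t in d..e, f (t + (c + h)) := by
      rw [intervalIntegral.integral_comp_add_right]
      congr 1 <;> ring
    have e2 : ∫ x in (c + d - h)..(c + e - h), f x = ∫ t in d..e, f (t + (c - h)) := by
      rw [intervalIntegral.integral_comp_add_right]
      congr 1 <;> ring
    rw [e1, e2]
    apply intervalIntegral.integral_mono_on hde
    · exact (hi.comp_add_right _).intervalIntegrable
    · exact (hi.comp_add_right _).intervalIntegrable
    · intro t ht
      have := aux_abs f c hs ha (t - h) (t + h) (by
        have : 0 ≤ t := hd.trans ht.1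
        rw [abs_of_nonneg (by linarith : 0 ≤ t + h)]
        exact abs_le.2 ⟨by linarith, by linarith⟩)
      convert this using 2 <;> ring
  linarith

lemma aux_G_symm (f : ℝ → ℝ) (c h : ℝ) (hs : ∀ t, f (c + t) = f (c - t)) (d : ℝ) :
    ∫ x in (c - d - h)..(c - d + h), f x = ∫ x in (c + d - h)..(c + d + h), f x := by
  have e1 : ∫ x in (c + d - h)..(c + d + h), f (2 * c - x) =
      ∫ x in (c - d - h)..(c - d + h), f x := by
    rw [intervalIntegral.integral_comp_sub_left]
    congr 1 <;> ring
  rw [← e1]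
  congr 1
  ext x
  have := hs (x - c)
  rw [show c + (x - c) = x by ring, show c - (x - c) = 2 * c - x by ring] at this
  exact this.symm

lemma aux_g (f : ℝ → ℝ) (c a b : ℝ) (hi : Integrable f) (hs : ∀ t, f (c + t) = f (c - t))
    (ha : AntitoneOn f (Set.Ici c)) (hab : a < b) (s t : ℝ)
    (h : |s - ((a + b) / 2 - c)| ≤ |t - ((a + b) / 2 - c)|) :
    ∫ x in a..b, f (x - t) ≤ ∫ x in a..b, f (x - s) := by
  have key : ∀ r, ∫ x in a..b, f (x - r) =
      ∫ x in (c + |r - ((a + b) / 2 - c)| - (b - a) / 2)..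
        (c + |r - ((a + b) / 2 - c)| + (b - a) / 2), f x := by
    intro r
    rw [intervalIntegral.integral_comp_sub_right]
    rcases abs_cases (r - ((a + b) / 2 - c)) with ⟨h1, _⟩ | ⟨h1, _⟩
    · rw [h1, ← aux_G_symm f c _ hs]
      congr 1 <;> ring
    · rw [h1]
      congr 1 <;> ring
  rw [key s, key t]
  exact aux_G_anti f c _ hi hs ha (by linarith) _ _ (abs_nonneg _) h

lemma aux_meas (f : ℝ → ℝ) (a b s : ℝ) (hn : ∀ x, 0 ≤ f x) (hi : Integrable f) (hab : a < b) :
    (volume.withDensity fun x => ENNReal.ofReal (f x)) (Set.Icc (a - s) (b - s)) =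
      ENNReal.ofReal (∫ x in a..b, f (x - s)) := by
  rw [withDensity_apply _ measurableSet_Icc, intervalIntegral.integral_comp_sub_right,
    intervalIntegral.integral_of_le (by linarith), ← integral_Icc_eq_integral_Ioc,
    ofReal_integral_eq_lintegral_ofReal hi.integrableOn (Filter.Eventually.of_forall hn)]

/-- Fact 3 combined with Remark 1: if the rectangle `∏ [ř_i, r̂_i]`
over-approximates the one-step reachable set of `Q_j` under `F`, then for every
`x ∈ Q_j` the probability that `F x + u + w` lands in the target rectangle
`∏ [a_i, b_i]` is bounded below by `∏ g_i (s_{i,min})` and above by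
`∏ g_i (s_{i,max})`. -/
theorem transition_bounds_of_reachable_overapprox
    (n : ℕ)
    (f : Fin n → ℝ → ℝ) (c a b rlo rhi u : Fin n → ℝ)
    (hf_nonneg : ∀ i x, 0 ≤ f i x)
    (hf_int : ∀ i, Integrable (f i))
    (hf_prob : ∀ i, ∫ x, f i x = 1)
    (hf_symm : ∀ i t, f i (c i + t) = f i (c i - t))
    (hf_mono : ∀ i, MonotoneOn (f i) (Set.Iic (c i)))
    (hf_anti : ∀ i, AntitoneOn (f i) (Set.Ici (c i)))
    (hab : ∀ i, a i < b i) (hr : ∀ i, rlo i ≤ rhi i)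
    (μ : Measure (Fin n → ℝ))
    (hμ : μ = Measure.pi fun i =>
      (volume : Measure ℝ).withDensity fun x => ENNReal.ofReal (f i x))
    (g : Fin n → ℝ → ℝ)
    (hg : ∀ i s, g i s = ∫ x in (a i)..(b i), f i (x - s))
    (sstar smax smin : Fin n → ℝ)
    (hsstar : ∀ i, sstar i = (a i + b i) / 2 - c i)
    (hsmax : ∀ i, smax i =
      if rlo i + u i ≤ sstar i ∧ sstar i ≤ rhi i + u i then sstar i
      else if rhi i + u i < sstar i then rhi i + u i else rlo i + u i)
    (hsmin : ∀ i, smin i =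
      if (rlo i + rhi i) / 2 + u i < smax i then rlo i + u i
      else rhi i + u i)
    (D Qj : Set (Fin n → ℝ)) (hQj : Qj ⊆ D)
    (F : (Fin n → ℝ) → (Fin n → ℝ))
    (hF : ∀ x ∈ Qj, ∀ i, F x i ∈ Set.Icc (rlo i) (rhi i)) :
    ∀ x ∈ Qj,
      ENNReal.ofReal (∏ i, g i (smin i)) ≤
        μ {y | ∀ i, F x i + u i + y i ∈ Set.Icc (a i) (b i)} ∧
      μ {y | ∀ i, F x i + u i + y i ∈ Set.Icc (a i) (b i)} ≤
        ENNReal.ofReal (∏ i, g i (smax i)) := by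
  intro x hx
  have hfin : ∀ i, IsFiniteMeasure
      ((volume : Measure ℝ).withDensity fun x => ENNReal.ofReal (f i x)) := fun i =>
    isFiniteMeasure_withDensity_ofReal (hf_int i).2
  have hset : {y : Fin n → ℝ | ∀ i, F x i + u i + y i ∈ Set.Icc (a i) (b i)} =
      Set.pi Set.univ fun i => Set.Icc (a i - (F x i + u i)) (b i - (F x i + u i)) := by
    ext y
    simp only [Set.mem_setOf_eq, Set.mem_pi, Set.mem_univ, true_imp_iff, Set.mem_Icc]
    refine forall_congr' fun i => ?_
    constructor <;> rintro ⟨h1, h2⟩ <;> constructor <;> linarith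
  have hg0 : ∀ i s, 0 ≤ g i s := fun i s => by
    rw [hg]
    exact intervalIntegral.integral_nonneg (hab i).le fun _ _ => hf_nonneg i _
  have hval : μ {y | ∀ i, F x i + u i + y i ∈ Set.Icc (a i) (b i)} =
      ENNReal.ofReal (∏ i, g i (F x i + u i)) := by
    rw [hset, hμ, Measure.pi_pi, ENNReal.ofReal_prod_of_nonneg fun i _ => hg0 i _]
    refine Finset.prod_congr rfl fun i _ => ?_
    rw [aux_meas (f i) _ _ _ (hf_nonneg i) (hf_int i) (hab i), hg]
  rw [hval]
  constructor
  · refine ENNReal.ofReal_le_ofReal (Finset.prod_le_prod (fun i _ => hg0 i _) fun i _ => ?_)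
    rw [hg, hg]
    apply aux_g (f i) (c i) _ _ (hf_int i) (hf_symm i) (hf_anti i) (hab i)
    rw [← hsstar]
    obtain ⟨h1, h2⟩ := hF x hx i
    have hM := hsmax i
    have hm := hsmin i
    split_ifs at hM hm <;> rw [hm] <;> grind
  · refine ENNReal.ofReal_le_ofReal (Finset.prod_le_prod (fun i _ => hg0 i _) fun i _ => ?_)
    rw [hg, hg]
    apply aux_g (f i) (c i) _ _ (hf_int i) (hf_symm i) (hf_anti i) (hab i)
    rw [← hsstar]
    obtain ⟨h1, h2⟩ := hF x hx i
    have hM := hsmax i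
    split_ifs at hM <;> rw [hM] <;> grind
end

section
/- Let ř ≤ r̂ be reals. Then sup_{s ∈ [ř, r̂]} g(s) = 0 if and only if r̂ + ŵ ≤ a or ř + w̌ ≥ b. (This is the one-dimensional 'off' trigger-region characterization of Proposition 4 of the paper: the upper transition-probability bound from the position interval [ř, r̂] into [a, b] vanishes exactly under the stated conditions.) -/
open MeasureTheory

/-- One-dimensional 'off' trigger-region characterization (Proposition 4):
the supremum of the landing probability `g` over the position interval
`[ř, r̂]` vanishes iff `r̂ + ŵ ≤ a` or `ř + w̌ ≥ b`. -/
theorem off_trigger_one_dim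
    (wlo whi : ℝ) (hw : wlo < whi)
    (f : ℝ → ℝ)
    (hf_nonneg : ∀ x, 0 ≤ f x)
    (hf_int : Integrable f)
    (hf_supp : ∀ x, x ∉ Set.Icc wlo whi → f x = 0)
    (hf_pos : ∀ x ∈ Set.Ioo wlo whi, 0 < f x)
    (a b : ℝ) (hab : a < b)
    (g : ℝ → ℝ) (hg : ∀ s, g s = ∫ x in a..b, f (x - s))
    (rlo rhi : ℝ) (hr : rlo ≤ rhi) :
    sSup (g '' Set.Icc rlo rhi) = 0 ↔ (rhi + whi ≤ a ∨ b ≤ rlo + wlo) := by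
  have hint : ∀ s, Integrable (fun x => f (x - s)) := fun s => hf_int.comp_sub_right s
  have hII : ∀ s c d, IntervalIntegrable (fun x => f (x - s)) volume c d :=
    fun s c d => (hint s).intervalIntegrable
  have hbdd : BddAbove (g '' Set.Icc rlo rhi) := by
    refine ⟨∫ x, f x, ?_⟩
    rintro _ ⟨s, -, rfl⟩
    rw [hg, intervalIntegral.integral_of_le hab.le, ← integral_sub_right_eq_self f s]
    exact setIntegral_le_integral (hint s) (Filter.Eventually.of_forall fun x => hf_nonneg _)
  constructor
  · intro h
    by_contra hcon
    push Not at hcon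
    obtain ⟨h1, h2⟩ := hcon
    obtain ⟨s, hs1, hs2, hs3, hs4⟩ :
        ∃ s, rlo ≤ s ∧ s ≤ rhi ∧ a < s + whi ∧ s + wlo < b := by
      by_cases hc : a < rlo + whi
      · exact ⟨rlo, le_rfl, hr, hc, h2⟩
      · obtain ⟨s, hs, hs'⟩ := exists_between (show a - whi < min rhi (b - wlo) from
          lt_min (by linarith) (by linarith))
        have := lt_min_iff.1 hs'
        exact ⟨s, by linarith, by linarith, by linarith, by linarith⟩
    have hcd : max a (s + wlo) < min b (s + whi) :=
      max_lt (lt_min hab hs3) (lt_min hs4 (by linarith))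
    have hpos : 0 < ∫ x in (max a (s + wlo))..(min b (s + whi)), f (x - s) := by
      refine intervalIntegral.intervalIntegral_pos_of_pos_on (hII s _ _) ?_ hcd
      intro x hx
      have h3 := max_lt_iff.1 hx.1
      have h4 := lt_min_iff.1 hx.2
      exact hf_pos _ ⟨by linarith, by linarith⟩
    have hle : (∫ x in (max a (s + wlo))..(min b (s + whi)), f (x - s)) ≤ g s := by
      rw [hg]
      exact intervalIntegral.integral_mono_interval (le_max_left _ _) hcd.le (min_le_left _ _)
        (Filter.Eventually.of_forall fun x => hf_nonneg _) (hII s _ _)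
    have := le_csSup hbdd (Set.mem_image_of_mem g (show s ∈ Set.Icc rlo rhi from ⟨hs1, hs2⟩))
    linarith
  · intro h
    have hz : ∀ s ∈ Set.Icc rlo rhi, g s = 0 := by
      intro s hs
      rw [hg, intervalIntegral.integral_of_le hab.le, integral_Ioc_eq_integral_Ioo]
      refine setIntegral_eq_zero_of_forall_eq_zero fun x hx => hf_supp _ fun hm => ?_
      rcases h with h | h
      · linarith [hs.2, hx.1, hm.2]
      · linarith [hs.1, hx.2, hm.1]
    have : g '' Set.Icc rlo rhi = {0} := by
      rw [Set.image_congr hz]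
      exact (Set.nonempty_Icc.2 hr).image_const 0
    rw [this, csSup_singleton]
end

section
/- Let ř ≤ r̂ be reals. Then inf_{s ∈ [ř, r̂]} g(s) > 0 if and only if ř + ŵ > a and r̂ + w̌ < b. (This is the one-dimensional 'on' trigger-region characterization of Proposition 4 of the paper: the lower transition-probability bound from the position interval [ř, r̂] into [a, b] is strictly positive exactly under the stated conditions.) -/
open MeasureTheory

/-- One-dimensional 'on' trigger-region characterization (Proposition 4):
the infimum of the landing probability `g` over the position interval
`[ř, r̂]` is strictly positive iff `ř + ŵ > a` and `r̂ + w̌ < b`. -/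
theorem on_trigger_one_dim
    (wlo whi : ℝ) (hw : wlo < whi)
    (f : ℝ → ℝ)
    (hf_nonneg : ∀ x, 0 ≤ f x)
    (hf_int : Integrable f)
    (hf_supp : ∀ x, x ∉ Set.Icc wlo whi → f x = 0)
    (hf_pos : ∀ x ∈ Set.Ioo wlo whi, 0 < f x)
    (a b : ℝ) (hab : a < b)
    (g : ℝ → ℝ) (hg : ∀ s, g s = ∫ x in a..b, f (x - s))
    (rlo rhi : ℝ) (hr : rlo ≤ rhi) :
    0 < sInf (g '' Set.Icc rlo rhi) ↔ a < rlo + whi ∧ rhi + wlo < b := by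
  have hii : ∀ u v : ℝ, IntervalIntegrable f volume u v := fun u v => hf_int.intervalIntegrable
  have hg' : ∀ s, g s = ∫ x in (a - s)..(b - s), f x := by
    intro s
    rw [hg s]
    exact intervalIntegral.integral_comp_sub_right f s
  have hcont : Continuous g := by
    have hF : Continuous (fun y => ∫ x in (0:ℝ)..y, f x) :=
      intervalIntegral.continuous_primitive hii 0
    have h2 : g = fun s => (∫ x in (0:ℝ)..(b - s), f x) - ∫ x in (0:ℝ)..(a - s), f x := by
      funext s
      rw [hg' s, intervalIntegral.integral_interval_sub_left (hii _ _) (hii _ _)]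
    rw [h2]
    exact (hF.comp (continuous_const.sub continuous_id)).sub
      (hF.comp (continuous_const.sub continuous_id))
  have hzero : ∀ u v : ℝ, u ≤ v → (∀ x ∈ Set.Ioo u v, f x = 0) → ∫ x in u..v, f x = 0 := by
    intro u v huv h
    rw [intervalIntegral.integral_of_le huv, integral_Ioc_eq_integral_Ioo]
    exact setIntegral_eq_zero_of_forall_eq_zero h
  have hcomp : IsCompact (g '' Set.Icc rlo rhi) := isCompact_Icc.image hcont
  constructor
  · intro h
    have hp : ∀ s ∈ Set.Icc rlo rhi, 0 < g s := fun s hs =>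
      lt_of_lt_of_le h (csInf_le hcomp.bddBelow (Set.mem_image_of_mem g hs))
    constructor
    · by_contra hc
      have h1 := hp rlo ⟨le_refl _, hr⟩
      rw [hg' rlo, hzero _ _ (by linarith)] at h1
      · exact lt_irrefl _ h1
      · intro x hx
        apply hf_supp
        intro hx'
        linarith [hx.1, hx'.2]
    · by_contra hc
      have h1 := hp rhi ⟨hr, le_refl _⟩
      rw [hg' rhi, hzero _ _ (by linarith)] at h1
      · exact lt_irrefl _ h1
      · intro x hx
        apply hf_supp
        intro hx'
        linarith [hx.2, hx'.1]
  · rintro ⟨h1, h2⟩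
    obtain ⟨s, hs, hsg⟩ := hcomp.sInf_mem ((Set.nonempty_Icc.2 hr).image g)
    rw [← hsg, hg' s]
    have hs1 := hs.1
    have hs2 := hs.2
    have hlt : max (a - s) wlo < min (b - s) whi := by
      rw [max_lt_iff, lt_min_iff, lt_min_iff]
      refine ⟨⟨?_, ?_⟩, ?_, hw⟩ <;> linarith
    have hpos : 0 < ∫ x in (max (a - s) wlo)..(min (b - s) whi), f x := by
      apply intervalIntegral.intervalIntegral_pos_of_pos_on (hii _ _) _ hlt
      intro x hx
      exact hf_pos x ⟨lt_of_le_of_lt (le_max_right _ _) hx.1,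
        lt_of_lt_of_le hx.2 (min_le_right _ _)⟩
    refine lt_of_lt_of_le hpos ?_
    exact intervalIntegral.integral_mono_interval (le_max_left _ _) hlt.le (min_le_left _ _)
      (Filter.Eventually.of_forall hf_nonneg) (hii _ _)
end

section
/- For every u ∈ ℝⁿ, sup_{s ∈ ∏_{k=1}^n [ř_k + u_k, r̂_k + u_k]} μ({y ∈ ℝⁿ : s + y ∈ ∏_{k=1}^n [a_k, b_k]}) = 0 if and only if there exists a coordinate k such that r̂_k + u_k + ŵ_k ≤ a_k or ř_k + u_k + w̌_k ≥ b_k. (This is the 'off' trigger-region characterization of Proposition 4 of the paper.) -/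
open MeasureTheory

/-- 'Off' trigger-region characterization (Proposition 4): the upper
transition-probability bound from the shifted position rectangle
`∏ [ř_k + u_k, r̂_k + u_k]` into the target rectangle `∏ [a_k, b_k]` vanishes
iff for some coordinate `k`, `r̂_k + u_k + ŵ_k ≤ a_k` or
`ř_k + u_k + w̌_k ≥ b_k`. -/
theorem off_trigger_region
    (n : ℕ)
    (wlo whi : Fin n → ℝ) (hw : ∀ k, wlo k < whi k)
    (f : Fin n → ℝ → ℝ)
    (hf_nonneg : ∀ k x, 0 ≤ f k x)
    (hf_int : ∀ k, Integrable (f k))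
    (hf_prob : ∀ k, ∫ x, f k x = 1)
    (hf_supp : ∀ k x, x ∉ Set.Icc (wlo k) (whi k) → f k x = 0)
    (hf_pos : ∀ k, ∀ x ∈ Set.Ioo (wlo k) (whi k), 0 < f k x)
    (a b rlo rhi : Fin n → ℝ)
    (hab : ∀ k, a k < b k) (hr : ∀ k, rlo k ≤ rhi k)
    (μ : Measure (Fin n → ℝ))
    (hμ : μ = Measure.pi fun k =>
      (volume : Measure ℝ).withDensity fun x => ENNReal.ofReal (f k x)) :
    ∀ u : Fin n → ℝ,
      (⨆ s ∈ {s : Fin n → ℝ | ∀ k, s k ∈ Set.Icc (rlo k + u k) (rhi k + u k)},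
        μ {y | ∀ k, s k + y k ∈ Set.Icc (a k) (b k)}) = 0 ↔
      ∃ k, rhi k + u k + whi k ≤ a k ∨ b k ≤ rlo k + u k + wlo k := by
  intro u
  have hfin : ∀ k, IsFiniteMeasure
      ((volume : Measure ℝ).withDensity fun x => ENNReal.ofReal (f k x)) :=
    fun k => isFiniteMeasure_withDensity_ofReal (hf_int k).2
  have hval : ∀ s : Fin n → ℝ, μ {y | ∀ k, s k + y k ∈ Set.Icc (a k) (b k)} =
      ∏ k, ((volume : Measure ℝ).withDensity fun x => ENNReal.ofReal (f k x))
        (Set.Icc (a k - s k) (b k - s k)) := by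
    intro s
    rw [hμ, ← Measure.pi_pi]
    congr 1
    ext y
    simp only [Set.mem_setOf_eq, Set.mem_pi, Set.mem_univ, true_imp_iff, Set.mem_Icc]
    refine forall_congr' fun k => ?_
    constructor <;> rintro ⟨h1, h2⟩ <;> constructor <;> linarith
  have hz : ∀ k (c d : ℝ),
      ((volume : Measure ℝ).withDensity fun x => ENNReal.ofReal (f k x)) (Set.Icc c d) = 0 ↔
      volume ({x | ENNReal.ofReal (f k x) ≠ 0} ∩ Set.Icc c d) = 0 := by
    intro k c d
    exact withDensity_apply_eq_zero' (hf_int k).1.aemeasurable.ennreal_ofReal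
  simp only [ENNReal.iSup_eq_zero, Set.mem_setOf_eq, hval, Finset.prod_eq_zero_iff,
    Finset.mem_univ, true_and, hz]
  constructor
  · intro h
    by_contra! hc
    have hex : ∀ k, ∃ t, t ∈ Set.Icc (rlo k + u k) (rhi k + u k) ∧
        a k - whi k < t ∧ t < b k - wlo k := by
      intro k
      obtain ⟨h1, h2⟩ := hc k
      have h3 := hw k
      have h4 := hab k
      have h5 := hr k
      by_cases h6 : rhi k + u k < b k - wlo k
      · exact ⟨rhi k + u k, ⟨by linarith, le_rfl⟩, by linarith, h6⟩
      by_cases h7 : a k - whi k < rlo k + u k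
      · exact ⟨rlo k + u k, ⟨le_rfl, by linarith⟩, h7, by linarith⟩
      push Not at h6 h7
      exact ⟨((a k - whi k) + (b k - wlo k)) / 2, ⟨by linarith, by linarith⟩,
        by linarith, by linarith⟩
    choose s hs hs1 hs2 using hex
    obtain ⟨k, hk⟩ := h s hs
    have hsub : Set.Ioo (max (a k - s k) (wlo k)) (min (b k - s k) (whi k)) ⊆
        {x | ENNReal.ofReal (f k x) ≠ 0} ∩ Set.Icc (a k - s k) (b k - s k) := by
      rintro x ⟨hx1, hx2⟩
      rw [max_lt_iff] at hx1
      rw [lt_min_iff] at hx2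
      refine ⟨?_, hx1.1.le, hx2.1.le⟩
      exact (ENNReal.ofReal_pos.2 (hf_pos k x ⟨hx1.2, hx2.2⟩)).ne'
    have h0 := measure_mono_null hsub hk
    rw [Real.volume_Ioo, ENNReal.ofReal_eq_zero, sub_nonpos] at h0
    have hlt : max (a k - s k) (wlo k) < min (b k - s k) (whi k) := by
      have := hs1 k
      have := hs2 k
      have := hab k
      have := hw k
      rw [max_lt_iff, lt_min_iff, lt_min_iff]
      refine ⟨⟨?_, ?_⟩, ?_, ?_⟩ <;> linarith
    exact absurd h0 (not_le.2 hlt)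
  · rintro ⟨k, hk⟩ s hs
    refine ⟨k, ?_⟩
    have hsk := hs k
    have hpt : ∀ x, ENNReal.ofReal (f k x) ≠ 0 → wlo k ≤ x ∧ x ≤ whi k := by
      intro x hx
      by_contra hn
      exact hx (by rw [hf_supp k x hn, ENNReal.ofReal_zero])
    rcases hk with hk | hk
    · refine measure_mono_null (t := {whi k}) ?_ (by simp)
      rintro x ⟨hx, hx1, hx2⟩
      have := hpt x hx
      exact le_antisymm this.2 (by linarith [hsk.2])
    · refine measure_mono_null (t := {wlo k}) ?_ (by simp)
      rintro x ⟨hx, hx1, hx2⟩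
      have := hpt x hx
      exact le_antisymm (by linarith [hsk.1]) this.1
end

section
/- Set c_k := (w̌_k + ŵ_k)/2 for each k. For every u ∈ ℝⁿ, inf_{s ∈ ∏_{k=1}^n [ř_k + u_k, r̂_k + u_k]} μ({y ∈ ℝⁿ : s + y ∈ ∏_{k=1}^n [a_k, b_k]}) > 0 if and only if for every coordinate k: either ((ř_k + r̂_k)/2 + u_k ≥ (a_k + b_k)/2 − c_k and r̂_k + u_k + w̌_k < b_k) or ((ř_k + r̂_k)/2 + u_k ≤ (a_k + b_k)/2 − c_k and ř_k + u_k + ŵ_k > a_k). (This is the 'on' trigger-region characterization of Proposition 4 of the paper, with strict inequalities at the boundary of the noise support.) -/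
open MeasureTheory

lemma aux_zero_iff (g : ℝ → ℝ) (hg : Integrable g) (s : Set ℝ) :
    ((volume : Measure ℝ).withDensity fun x => ENNReal.ofReal (g x)) s = 0 ↔
      volume ({x | 0 < g x} ∩ s) = 0 := by
  rw [withDensity_apply_eq_zero' hg.1.aemeasurable.ennreal_ofReal]
  simp

lemma aux_pos (g : ℝ → ℝ) (hg : Integrable g) (w w' : ℝ)
    (hpos : ∀ x ∈ Set.Ioo w w', 0 < g x) (p q : ℝ) (hp : w ≤ p) (hpq : p < q) (hq : q ≤ w') :
    0 < ((volume : Measure ℝ).withDensity fun x => ENNReal.ofReal (g x)) (Set.Ioo p q) := by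
  rw [pos_iff_ne_zero, Ne, aux_zero_iff g hg]
  have : {x | 0 < g x} ∩ Set.Ioo p q = Set.Ioo p q := by
    apply Set.inter_eq_right.2
    intro x hx
    exact hpos x ⟨hp.trans_lt hx.1, hx.2.trans_le hq⟩
  rw [this]
  simp [hpq]

lemma aux_unif (g : ℝ → ℝ) (hg : Integrable g) (w w' : ℝ) (hw : w < w')
    (hpos : ∀ x ∈ Set.Ioo w w', 0 < g x) (a b l h : ℝ) (hab : a < b)
    (h1 : a < l + w') (h2 : h + w < b) :
    ∃ δ : ENNReal, 0 < δ ∧ ∀ s ∈ Set.Icc l h,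
      δ ≤ ((volume : Measure ℝ).withDensity fun x => ENNReal.ofReal (g x))
        (Set.Icc (a - s) (b - s)) := by
  refine IsCompact.induction_on (isCompact_Icc (a := l) (b := h))
    (p := fun S => ∃ δ : ENNReal, 0 < δ ∧ ∀ s ∈ S,
      δ ≤ ((volume : Measure ℝ).withDensity fun x => ENNReal.ofReal (g x))
        (Set.Icc (a - s) (b - s))) ⟨1, one_pos, by simp⟩ ?_ ?_ ?_
  · rintro S T hST ⟨δ, h0, hd⟩
    exact ⟨δ, h0, fun s hs => hd s (hST hs)⟩
  · rintro S T ⟨δ, h0, hd⟩ ⟨ε, e0, he⟩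
    refine ⟨min δ ε, lt_min h0 e0, ?_⟩
    rintro s (hs | hs)
    · exact (min_le_left _ _).trans (hd s hs)
    · exact (min_le_right _ _).trans (he s hs)
  · intro s0 hs0
    obtain ⟨hl, hh⟩ := hs0
    have hlt : max (a - s0) w < min (b - s0) w' := by
      rw [max_lt_iff, lt_min_iff, lt_min_iff]
      refine ⟨⟨?_, ?_⟩, ?_, ?_⟩ <;> linarith
    obtain ⟨p, hp1, hp2⟩ := exists_between hlt
    obtain ⟨q, hq1, hq2⟩ := exists_between hp2
    rw [max_lt_iff] at hp1
    rw [lt_min_iff] at hq2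
    refine ⟨Set.Ioo (a - p) (b - q), mem_nhdsWithin_of_mem_nhds
      (Ioo_mem_nhds (by linarith) (by linarith)), _,
      aux_pos g hg w w' hpos p q hp1.2.le hq1 hq2.2.le, ?_⟩
    intro s hs
    apply measure_mono
    intro x hx
    exact ⟨by linarith [hs.1, hx.1], by linarith [hs.2, hx.2]⟩

lemma aux_null (g : ℝ → ℝ) (hg : Integrable g) (w w' : ℝ)
    (hs : ∀ x, x ∉ Set.Icc w w' → g x = 0) (p q : ℝ) (h : w' ≤ p ∨ q ≤ w) :
    ((volume : Measure ℝ).withDensity fun x => ENNReal.ofReal (g x)) (Set.Icc p q) = 0 := by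
  rw [aux_zero_iff g hg]
  refine measure_mono_null (t := {w, w'}) ?_ ((Set.toFinite _).measure_zero _)
  rintro x ⟨hx, hx1, hx2⟩
  have hm : x ∈ Set.Icc w w' := by
    by_contra hc
    have := hs x hc
    simp [this] at hx
  rcases h with h | h
  · right; exact le_antisymm hm.2 (h.trans hx1)
  · left; exact le_antisymm (hx2.trans h) hm.1

/-- 'On' trigger-region characterization (Proposition 4): with
`c_k = (w̌_k + ŵ_k)/2`, the lower transition-probability bound from the shifted
position rectangle `∏ [ř_k + u_k, r̂_k + u_k]` into the target rectangle
`∏ [a_k, b_k]` is strictly positive iff for every coordinate `k`: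
either `(ř_k + r̂_k)/2 + u_k ≥ (a_k + b_k)/2 − c_k` and
`r̂_k + u_k + w̌_k < b_k`, or `(ř_k + r̂_k)/2 + u_k ≤ (a_k + b_k)/2 − c_k` and
`ř_k + u_k + ŵ_k > a_k`. -/
theorem on_trigger_region
    (n : ℕ)
    (wlo whi : Fin n → ℝ) (hw : ∀ k, wlo k < whi k)
    (f : Fin n → ℝ → ℝ)
    (hf_nonneg : ∀ k x, 0 ≤ f k x)
    (hf_int : ∀ k, Integrable (f k))
    (hf_prob : ∀ k, ∫ x, f k x = 1)
    (hf_supp : ∀ k x, x ∉ Set.Icc (wlo k) (whi k) → f k x = 0)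
    (hf_pos : ∀ k, ∀ x ∈ Set.Ioo (wlo k) (whi k), 0 < f k x)
    (a b rlo rhi : Fin n → ℝ)
    (hab : ∀ k, a k < b k) (hr : ∀ k, rlo k ≤ rhi k)
    (μ : Measure (Fin n → ℝ))
    (hμ : μ = Measure.pi fun k =>
      (volume : Measure ℝ).withDensity fun x => ENNReal.ofReal (f k x))
    (c : Fin n → ℝ) (hc : ∀ k, c k = (wlo k + whi k) / 2) :
    ∀ u : Fin n → ℝ,
      (0 < ⨅ s ∈ {s : Fin n → ℝ | ∀ k, s k ∈ Set.Icc (rlo k + u k) (rhi k + u k)},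
        μ {y | ∀ k, s k + y k ∈ Set.Icc (a k) (b k)}) ↔
      ∀ k, ((a k + b k) / 2 - c k ≤ (rlo k + rhi k) / 2 + u k ∧
              rhi k + u k + wlo k < b k) ∨
           ((rlo k + rhi k) / 2 + u k ≤ (a k + b k) / 2 - c k ∧
              a k < rlo k + u k + whi k) := by
  intro u
  haveI : ∀ k, IsFiniteMeasure
      ((volume : Measure ℝ).withDensity fun x => ENNReal.ofReal (f k x)) := fun k =>
    isFiniteMeasure_withDensity_ofReal (hf_int k).2
  have hval : ∀ s : Fin n → ℝ, μ {y | ∀ k, s k + y k ∈ Set.Icc (a k) (b k)} =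
      ∏ k, ((volume : Measure ℝ).withDensity fun x => ENNReal.ofReal (f k x))
        (Set.Icc (a k - s k) (b k - s k)) := by
    intro s
    rw [hμ, ← Measure.pi_pi]
    congr 1
    ext y
    simp only [Set.mem_setOf_eq, Set.mem_pi, Set.mem_univ, true_imp_iff, Set.mem_Icc]
    refine forall_congr' fun k => ?_
    constructor <;> rintro ⟨h1, h2⟩ <;> constructor <;> linarith
  simp only [hval]
  have hcond : (∀ k, ((a k + b k) / 2 - c k ≤ (rlo k + rhi k) / 2 + u k ∧
              rhi k + u k + wlo k < b k) ∨
           ((rlo k + rhi k) / 2 + u k ≤ (a k + b k) / 2 - c k ∧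
              a k < rlo k + u k + whi k)) ↔
      ∀ k, a k < rlo k + u k + whi k ∧ rhi k + u k + wlo k < b k := by
    refine forall_congr' fun k => ?_
    rw [hc k]
    constructor
    · rintro (⟨h1, h2⟩ | ⟨h1, h2⟩) <;> constructor <;> linarith
    · rintro ⟨h1, h2⟩
      rcases le_total ((a k + b k) / 2 - (wlo k + whi k) / 2) ((rlo k + rhi k) / 2 + u k)
        with h | h
      · exact Or.inl ⟨h, h2⟩
      · exact Or.inr ⟨h, h1⟩
  rw [hcond]
  constructor
  · intro hpos k
    have key : ∀ s : Fin n → ℝ, (∀ k, s k ∈ Set.Icc (rlo k + u k) (rhi k + u k)) →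
        ((volume : Measure ℝ).withDensity fun x => ENNReal.ofReal (f k x))
          (Set.Icc (a k - s k) (b k - s k)) ≠ 0 := by
      intro s hs h0
      have h1 := hpos.trans_le (iInf₂_le s hs)
      rw [Finset.prod_eq_zero (Finset.mem_univ k) h0] at h1
      exact lt_irrefl _ h1
    constructor
    · by_contra hcon
      push Not at hcon
      exact key (fun k => rlo k + u k) (fun k => ⟨le_rfl, by linarith [hr k]⟩)
        (aux_null (f k) (hf_int k) (wlo k) (whi k) (hf_supp k) _ _ (Or.inl (by linarith)))
    · by_contra hcon
      push Not at hcon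
      exact key (fun k => rhi k + u k) (fun k => ⟨by linarith [hr k], le_rfl⟩)
        (aux_null (f k) (hf_int k) (wlo k) (whi k) (hf_supp k) _ _ (Or.inr (by linarith)))
  · intro h
    choose δ hδ hle using fun k => aux_unif (f k) (hf_int k) (wlo k) (whi k) (hw k) (hf_pos k)
      (a k) (b k) (rlo k + u k) (rhi k + u k) (hab k) (h k).1 (h k).2
    have h0 : 0 < ∏ k, δ k := by
      rw [pos_iff_ne_zero, Finset.prod_ne_zero_iff]
      exact fun k _ => (hδ k).ne'
    refine h0.trans_le (le_iInf₂ fun s hs => ?_)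
    exact Finset.prod_le_prod' fun k _ => hle k (s k) (hs k)
end

section
/- For every ℓ ∈ {1, …, m}, the greedy prefix sums satisfy Σ_{k≤ℓ} z_k = min( Σ_{k≤ℓ} T̂_k , 1 − Σ_{k>ℓ} Ť_k ), and for every feasible z' and every ℓ one has Σ_{k≤ℓ} z'_k ≤ Σ_{k≤ℓ} z_k; that is, the greedy assignment maximizes every prefix sum over the feasible set. -/
/-- The greedy probability assignment `z` of the interval value-iteration
algorithm maximizes every prefix sum over the feasible set, and its prefix
sums are given by `∑_{k ≤ ℓ} z k = min (∑_{k ≤ ℓ} T̂ k) (1 - ∑_{k > ℓ} Ť k)`. -/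
theorem greedy_assignment_prefix_sums
    (m : ℕ) (hm : 1 ≤ m)
    (Tlo Thi : Fin m → ℝ)
    (h0 : ∀ ℓ, 0 ≤ Tlo ℓ) (hle : ∀ ℓ, Tlo ℓ ≤ Thi ℓ)
    (hsumlo : ∑ ℓ, Tlo ℓ ≤ 1) (hsumhi : 1 ≤ ∑ ℓ, Thi ℓ)
    (z : Fin m → ℝ)
    (hz : ∀ ℓ, z ℓ = min (Thi ℓ)
      (1 - ∑ k ∈ Finset.Iio ℓ, z k - ∑ k ∈ Finset.Ioi ℓ, Tlo k)) :
    (∀ ℓ, ∑ k ∈ Finset.Iic ℓ, z k =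
      min (∑ k ∈ Finset.Iic ℓ, Thi k) (1 - ∑ k ∈ Finset.Ioi ℓ, Tlo k)) ∧
    (∀ z' : Fin m → ℝ, (∀ ℓ, Tlo ℓ ≤ z' ℓ ∧ z' ℓ ≤ Thi ℓ) → ∑ ℓ, z' ℓ = 1 →
      ∀ ℓ, ∑ k ∈ Finset.Iic ℓ, z' k ≤ ∑ k ∈ Finset.Iic ℓ, z k) := by
  have hIic : ∀ (f : Fin m → ℝ) (l : Fin m),
      ∑ k ∈ Finset.Iic l, f k = f l + ∑ k ∈ Finset.Iio l, f k := by
    intro f l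
    rw [← Finset.Iio_insert, Finset.sum_insert (by simp)]
  have hIci : ∀ (f : Fin m → ℝ) (l : Fin m),
      ∑ k ∈ Finset.Ici l, f k = f l + ∑ k ∈ Finset.Ioi l, f k := by
    intro f l
    rw [← Finset.Ioi_insert, Finset.sum_insert (by simp)]
  have hstep : ∀ l : Fin m,
      ∑ k ∈ Finset.Iio l, z k =
        min (∑ k ∈ Finset.Iio l, Thi k) (1 - ∑ k ∈ Finset.Ici l, Tlo k) →
      ∑ k ∈ Finset.Iic l, z k =
        min (∑ k ∈ Finset.Iic l, Thi k) (1 - ∑ k ∈ Finset.Ioi l, Tlo k) := by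
    intro l h
    have h1 := hz l
    have h2 := hle l
    rw [hIci] at h
    rw [hIic, hIic]
    grind
  have hpre : ∀ n : ℕ, ∀ hn : n < m,
      ∑ k ∈ Finset.Iio (⟨n, hn⟩ : Fin m), z k =
        min (∑ k ∈ Finset.Iio (⟨n, hn⟩ : Fin m), Thi k)
          (1 - ∑ k ∈ Finset.Ici (⟨n, hn⟩ : Fin m), Tlo k) := by
    intro n
    induction n with
    | zero =>
      intro hn
      have e1 : Finset.Iio (⟨0, hn⟩ : Fin m) = ∅ := by
        ext x; simp [Fin.lt_def]
      have e2 : Finset.Ici (⟨0, hn⟩ : Fin m) = Finset.univ := by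
        ext x; simp [Fin.le_def]
      rw [e1, e2]
      simp only [Finset.sum_empty]
      rw [min_eq_left (by linarith)]
    | succ n ih =>
      intro hn
      have hn' : n < m := by omega
      have e1 : Finset.Iio (⟨n + 1, hn⟩ : Fin m) = Finset.Iic ⟨n, hn'⟩ := by
        ext x; simp only [Finset.mem_Iio, Finset.mem_Iic, Fin.lt_def, Fin.le_def]; omega
      have e2 : Finset.Ici (⟨n + 1, hn⟩ : Fin m) = Finset.Ioi ⟨n, hn'⟩ := by
        ext x; simp only [Finset.mem_Ici, Finset.mem_Ioi, Fin.lt_def, Fin.le_def]; omega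
      rw [e1, e2]
      exact hstep _ (ih hn')
  have hmain : ∀ l : Fin m, ∑ k ∈ Finset.Iic l, z k =
      min (∑ k ∈ Finset.Iic l, Thi k) (1 - ∑ k ∈ Finset.Ioi l, Tlo k) :=
    fun l => hstep l (hpre l.1 l.2)
  refine ⟨hmain, ?_⟩
  intro z' hb hs l
  rw [hmain l]
  apply le_min
  · exact Finset.sum_le_sum fun k _ => (hb k).2
  · have h1 : ∑ k ∈ Finset.Ioi l, Tlo k ≤ ∑ k ∈ Finset.Ioi l, z' k :=
      Finset.sum_le_sum fun k _ => (hb k).1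
    have h2 : ∑ k ∈ Finset.Iic l, z' k + ∑ k ∈ Finset.Ioi l, z' k = ∑ k, z' k := by
      rw [← Finset.sum_add_sum_compl (Finset.Iic l)]
      congr 2
      ext x; simp
    linarith
end

section
/- Let p : {1, …, m} → ℝ be monotone nondecreasing (p_k ≤ p_ℓ whenever k ≤ ℓ). Then for every feasible z' one has Σ_{ℓ=1}^m p_ℓ · z_ℓ ≤ Σ_{ℓ=1}^m p_ℓ · z'_ℓ; that is, the greedy assignment z minimizes the expected value Σ_ℓ p_ℓ z'_ℓ over all probability distributions z' respecting the interval bounds. (This is the correctness of the worst-case adversary step of the interval value-iteration algorithm used in the paper's reachability maximization, Section 5.2.) -/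
theorem greedy_aux_step {m : ℕ} (f : Fin m → ℝ) (n : ℕ) (hn : n < m) :
    ∑ i with i.val < n + 1, f i = ∑ i with i.val < n, f i + f ⟨n, hn⟩ := by
  have : (Finset.univ.filter fun i : Fin m => i.val < n + 1)
      = insert ⟨n, hn⟩ (Finset.univ.filter fun i : Fin m => i.val < n) := by
    ext i
    simp [Fin.ext_iff]
    omega
  rw [this, Finset.sum_insert (by simp), add_comm]

theorem greedy_aux_abel {m : ℕ} (p d : Fin m → ℝ) (hp : Monotone p)
    (hd : ∀ n ≤ m, 0 ≤ ∑ i with i.val < n, d i) :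
    ∀ n ≤ m, ∀ c : ℝ, (∀ i : Fin m, i.val < n → p i ≤ c) →
      ∑ i with i.val < n, p i * d i ≤ c * ∑ i with i.val < n, d i := by
  intro n
  induction n with
  | zero => intro _ c _; simp
  | succ n ih =>
    intro hn c hc
    have h1 := ih (by omega) (p ⟨n, hn⟩) (fun i hi => hp (by
      rw [Fin.le_def]; exact hi.le))
    have h2 := mul_le_mul_of_nonneg_right (hc ⟨n, hn⟩ (by simp)) (hd (n + 1) hn)
    have h3 := greedy_aux_step d n hn
    have h4 := greedy_aux_step (fun i => p i * d i) n hn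
    rw [h4]
    refine le_trans ?_ h2
    rw [h3]
    linarith

/-- Correctness of the worst-case adversary step of interval value iteration:
for `p` monotone nondecreasing, the greedy assignment `z` minimizes the
expected value `∑ ℓ, p ℓ * z' ℓ` over all feasible distributions `z'`. -/
theorem greedy_assignment_minimizes
    (m : ℕ) (hm : 1 ≤ m)
    (Tlo Thi : Fin m → ℝ)
    (h0 : ∀ ℓ, 0 ≤ Tlo ℓ) (hle : ∀ ℓ, Tlo ℓ ≤ Thi ℓ)
    (hsumlo : ∑ ℓ, Tlo ℓ ≤ 1) (hsumhi : 1 ≤ ∑ ℓ, Thi ℓ)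
    (z : Fin m → ℝ)
    (hz : ∀ ℓ, z ℓ = min (Thi ℓ)
      (1 - ∑ k ∈ Finset.Iio ℓ, z k - ∑ k ∈ Finset.Ioi ℓ, Tlo k))
    (p : Fin m → ℝ) (hp : Monotone p) :
    ∀ z' : Fin m → ℝ, (∀ ℓ, Tlo ℓ ≤ z' ℓ ∧ z' ℓ ≤ Thi ℓ) → ∑ ℓ, z' ℓ = 1 →
      ∑ ℓ, p ℓ * z ℓ ≤ ∑ ℓ, p ℓ * z' ℓ := by
  intro z' hb hs
  have hIio : ∀ (f : Fin m → ℝ) (ℓ : Fin m),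
      ∑ k ∈ Finset.Iio ℓ, f k = ∑ i with i.val < ℓ.val, f i := by
    intro f ℓ
    congr 1
    ext i
    simp
  have hIoi : ∀ (f : Fin m → ℝ) (ℓ : Fin m),
      ∑ k ∈ Finset.Ioi ℓ, f k = ∑ i, f i - ∑ i with i.val < ℓ.val + 1, f i := by
    intro f ℓ
    rw [← Finset.sum_filter_add_sum_filter_not Finset.univ (fun i : Fin m => i.val < ℓ.val + 1) f,
      add_sub_cancel_left]
    congr 1
    ext i
    simp only [Finset.mem_Ioi, Finset.mem_filter, Finset.mem_univ, true_and, Fin.lt_def]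
    omega
  have hpre : ∀ n ≤ m, ∑ i with i.val < n, z' i ≤ ∑ i with i.val < n, z i := by
    intro n
    induction n with
    | zero => intro _; simp
    | succ n ih =>
      intro hn
      have h1 := ih (by omega)
      have h2 := greedy_aux_step z n hn
      have h3 := greedy_aux_step z' n hn
      have h4 := hz ⟨n, hn⟩
      have h5 := hIio z ⟨n, hn⟩
      have h6 := hIoi z' ⟨n, hn⟩
      have h7 : ∑ k ∈ Finset.Ioi (⟨n, hn⟩ : Fin m), Tlo k ≤ ∑ k ∈ Finset.Ioi ⟨n, hn⟩, z' k :=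
        Finset.sum_le_sum fun i _ => (hb i).1
      have h8 := (hb ⟨n, hn⟩).2
      simp only at h5 h6
      rcases min_choice (Thi ⟨n, hn⟩) (1 - ∑ k ∈ Finset.Iio (⟨n, hn⟩ : Fin m), z k
        - ∑ k ∈ Finset.Ioi (⟨n, hn⟩ : Fin m), Tlo k) with h | h <;> rw [h] at h4 <;> linarith
  have hfull : ∀ f : Fin m → ℝ, ∑ i with i.val < m, f i = ∑ i, f i := by
    intro f
    congr 1
    ext i
    simp
  have htot : ∑ i, z i ≤ 1 := by
    have hl : m - 1 < m := by omega
    have h1 := (hz ⟨m - 1, hl⟩).trans_le (min_le_right _ _)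
    have h2 := greedy_aux_step z (m - 1) hl
    have h3 := hIio z ⟨m - 1, hl⟩
    have h4 := hIoi Tlo ⟨m - 1, hl⟩
    simp only [Nat.sub_add_cancel hm, hfull] at h2 h3 h4
    linarith
  have hge := hpre m le_rfl
  rw [hfull, hfull] at hge
  have key := greedy_aux_abel p (fun i => z i - z' i) hp (by
    intro n hn
    rw [Finset.sum_sub_distrib]
    linarith [hpre n hn]) m le_rfl (p ⟨m - 1, by omega⟩) (fun i hi => hp (by
      rw [Fin.le_def]; simp only; omega))
  rw [hfull, hfull, Finset.sum_sub_distrib] at key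
  have h0' : ∑ i, z i - ∑ i, z' i = 0 := by linarith
  rw [h0', mul_zero] at key
  simp only [mul_sub, Finset.sum_sub_distrib] at key
  linarith
end

section
/- Let p : {1, …, m} → ℝ be monotone nonincreasing (p_k ≥ p_ℓ whenever k ≤ ℓ). Then for every feasible z' one has Σ_{ℓ=1}^m p_ℓ · z_ℓ ≥ Σ_{ℓ=1}^m p_ℓ · z'_ℓ; that is, the greedy assignment z maximizes the expected value Σ_ℓ p_ℓ z'_ℓ over all probability distributions z' respecting the interval bounds. (This is the correctness of the best-case adversary step used in the paper's upper-bound reachability maximization, Section 5.3.) -/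
theorem abel_aux : ∀ (n : ℕ) (d p : Fin n → ℝ) (b : ℝ), Antitone p → (∀ i, b ≤ p i) →
    (∀ i, 0 ≤ ∑ k, if k ≤ i then d k else 0) → b * ∑ k, d k ≤ ∑ k, p k * d k := by
  intro n
  induction n with
  | zero => intro d p b _ _ _; simp
  | succ n ih =>
    intro d p b hp hb hd
    have h1 := ih (fun k => d k.castSucc) (fun k => p k.castSucc) (p (Fin.last n))
      (fun i j hij => hp (by simpa using hij)) (fun i => hp (Fin.le_last _))
      (fun i => by
        have h := hd i.castSucc
        rw [Fin.sum_univ_castSucc] at h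
        have h2 : ¬ (Fin.last n ≤ i.castSucc) := not_le.mpr (Fin.castSucc_lt_last i)
        simpa [h2] using h)
    have h3 : 0 ≤ ∑ k, d k := by
      have h := hd (Fin.last n)
      simpa [Fin.le_last] using h
    have h4 := mul_le_mul_of_nonneg_right (hb (Fin.last n)) h3
    rw [Fin.sum_univ_castSucc] at h4 ⊢
    rw [Fin.sum_univ_castSucc (f := fun k => p k * d k)]
    linarith [mul_add (p (Fin.last n)) (∑ k : Fin n, d k.castSucc) (d (Fin.last n))]


/-- Correctness of the best-case adversary step of interval value iteration:
for `p` monotone nonincreasing, the greedy assignment `z` maximizes the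
expected value `∑ ℓ, p ℓ * z' ℓ` over all feasible distributions `z'`. -/
theorem greedy_assignment_maximizes
    (m : ℕ) (hm : 1 ≤ m)
    (Tlo Thi : Fin m → ℝ)
    (h0 : ∀ ℓ, 0 ≤ Tlo ℓ) (hle : ∀ ℓ, Tlo ℓ ≤ Thi ℓ)
    (hsumlo : ∑ ℓ, Tlo ℓ ≤ 1) (hsumhi : 1 ≤ ∑ ℓ, Thi ℓ)
    (z : Fin m → ℝ)
    (hz : ∀ ℓ, z ℓ = min (Thi ℓ)
      (1 - ∑ k ∈ Finset.Iio ℓ, z k - ∑ k ∈ Finset.Ioi ℓ, Tlo k))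
    (p : Fin m → ℝ) (hp : Antitone p) :
    ∀ z' : Fin m → ℝ, (∀ ℓ, Tlo ℓ ≤ z' ℓ ∧ z' ℓ ≤ Thi ℓ) → ∑ ℓ, z' ℓ = 1 →
      ∑ ℓ, p ℓ * z' ℓ ≤ ∑ ℓ, p ℓ * z ℓ := by
  intro z' hz' hs
  obtain ⟨n, rfl⟩ : ∃ n, m = n + 1 := ⟨m - 1, by omega⟩
  have split : ∀ (f : Fin (n+1) → ℝ) i,
      ∑ k ∈ Finset.Iic i, f k = ∑ k ∈ Finset.Iio i, f k + f i := by
    intro f i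
    rw [← Finset.Iio_insert, Finset.sum_insert (by simp), add_comm]
  have split2 : ∀ (f : Fin (n+1) → ℝ) i,
      ∑ k ∈ Finset.Iic i, f k + ∑ k ∈ Finset.Ioi i, f k = ∑ k, f k := by
    intro f i
    rw [← Finset.sum_union]
    · congr 1
      ext k
      simpa using le_or_gt k i
    · rw [Finset.disjoint_left]
      intro k
      simp
  have step : ∀ i, ∑ k ∈ Finset.Iio i, z' k ≤ ∑ k ∈ Finset.Iio i, z k →
      ∑ k ∈ Finset.Iic i, z' k ≤ ∑ k ∈ Finset.Iic i, z k := by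
    intro i hi
    have hT : ∑ k ∈ Finset.Ioi i, Tlo k ≤ ∑ k ∈ Finset.Ioi i, z' k :=
      Finset.sum_le_sum fun k _ => (hz' k).1
    have h2 := split2 z' i
    have h3 := split z' i
    rw [split z i, hz i]
    rcases min_choice (Thi i) (1 - ∑ k ∈ Finset.Iio i, z k - ∑ k ∈ Finset.Ioi i, Tlo k)
      with h | h
    · rw [h]
      linarith [(hz' i).2]
    · rw [h]
      linarith
  have pre : ∀ i, ∑ k ∈ Finset.Iic i, z' k ≤ ∑ k ∈ Finset.Iic i, z k := by
    intro i
    induction i using Fin.induction with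
    | zero =>
      apply step
      have : Finset.Iio (0 : Fin (n+1)) = ∅ := by ext k; simp
      rw [this]; simp
    | succ i ih =>
      apply step
      have : Finset.Iio i.succ = Finset.Iic i.castSucc := by
        ext k
        simp only [Finset.mem_Iio, Finset.mem_Iic, Fin.lt_def, Fin.le_def, Fin.val_succ,
          Fin.val_castSucc]
        omega
      rw [this]; exact ih
  have hE : Finset.Ioi (Fin.last n) = ∅ := by
    ext k
    simp [Fin.le_last]
  have htot : ∑ k, z k = 1 := by
    have a := split2 z (Fin.last n)
    have b := split2 z' (Fin.last n)
    have c := pre (Fin.last n)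
    have e := split z (Fin.last n)
    have g := hz (Fin.last n)
    rw [hE] at a b g
    simp only [Finset.sum_empty] at a b g
    have := g.le.trans (min_le_right _ _)
    linarith
  have key := abel_aux (n+1) (fun k => z k - z' k) p (p (Fin.last n)) hp
    (fun i => hp (Fin.le_last i)) (fun i => by
      rw [← Finset.sum_filter]
      have : Finset.univ.filter (fun k => k ≤ i) = Finset.Iic i := by ext k; simp
      rw [this, Finset.sum_sub_distrib]
      linarith [pre i])
  simp only [mul_sub, Finset.sum_sub_distrib] at key
  rw [htot, hs] at key
  linarith
end
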